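/- arXiv:1707.05389 — 4 statements merged into one kernel-verified Lean document; each statement's English description precedes it below -/
import Mathlib

section
/- Let h : ℝ² → ℝ and h1 : ℝ → ℝ be smooth, let H1(y) = ∫_0^y h1(s) ds, and let h0 ∈ ℝ. Let u : ℝ² → ℝ be a smooth function of (t,x) with u(t,x) > |u_x(t,x)| > 0 at every point, set m = u − u_xx, and suppose that at every point m_t + f(u,u_x) m + ∂_x( g(u,u_x) m ) = 0, where f(u,u_x) = u_x h(u,u_x) + (1/2) u_x h1(u² − u_x²)/u + (1/2) h0/(u² − u_x²) and g(u,u_x) = u h(u,u_x) − (1/2) h1(u² − u_x²) − (1/2) h0 u/( u_x (u² − u_x²) ). Then at every point ∂_t( u² + u_x² ) + ∂_x Φ = 0, where Φ = −2 u u_tx + 2 u² h(u,u_x) m − u h1(u² − u_x²) m − h0 u² m/( u_x (u² − u_x²) ) + H1(u² − u_x²) + h0 log( (u − u_x)/(u + u_x) ) + 2 h0 x; that is, the H¹ density u² + u_x² satisfies a local conservation law. -/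
open Real

noncomputable section

/-- Partial derivative in the first (time) variable. -/
def pt (f : ℝ → ℝ → ℝ) (t x : ℝ) : ℝ := deriv (fun s => f s x) t

/-- Partial derivative in the second (space) variable. -/
def px (f : ℝ → ℝ → ℝ) (t x : ℝ) : ℝ := deriv (fun y => f t y) x

/-- The momentum variable `m = u - u_xx`. -/
def mf (u : ℝ → ℝ → ℝ) (t x : ℝ) : ℝ := u t x - px (px u) t x

/-! The momentum equation `m_t + f m + (g m)_x = 0` has the conservation-law multiplier `2u`.
For arbitrary `f`, `g` and any `u` of class `C³`, with no equation imposed,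
`∂_t (u² + u_x²) + ∂_x (-2 u u_tx + 2 u g m) = 2u (m_t + f m + (g m)_x) - 2 (u f - u_x g) m`,
so a conservation law results as soon as `2 (u f - u_x g) m` is a total `x`-derivative. For the
present family the terms in `h` cancel, and what remains is the derivative of
`H1 (u² - u_x²) + h0 log ((u - u_x) / (u + u_x)) + 2 h0 x`, because
`∂_x (u² - u_x²) = 2 u_x m`. -/

open Function

section PartialDerivatives

variable {f : ℝ → ℝ → ℝ} {t x : ℝ}

theorem hasDerivAt_fst_of_uncurry (hf : DifferentiableAt ℝ (uncurry f) (t, x)) :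
    HasDerivAt (fun s => f s x) (fderiv ℝ (uncurry f) (t, x) (1, 0)) t :=
  hf.hasFDerivAt.comp_hasDerivAt_of_eq t ((hasDerivAt_id t).prodMk (hasDerivAt_const t x)) rfl

theorem hasDerivAt_snd_of_uncurry (hf : DifferentiableAt ℝ (uncurry f) (t, x)) :
    HasDerivAt (fun y => f t y) (fderiv ℝ (uncurry f) (t, x) (0, 1)) x :=
  hf.hasFDerivAt.comp_hasDerivAt_of_eq x ((hasDerivAt_const x t).prodMk (hasDerivAt_id x)) rfl

theorem hasDerivAt_pt (hf : DifferentiableAt ℝ (uncurry f) (t, x)) :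
    HasDerivAt (fun s => f s x) (pt f t x) t :=
  (hasDerivAt_fst_of_uncurry hf).differentiableAt.hasDerivAt

theorem hasDerivAt_px (hf : DifferentiableAt ℝ (uncurry f) (t, x)) :
    HasDerivAt (fun y => f t y) (px f t x) x :=
  (hasDerivAt_snd_of_uncurry hf).differentiableAt.hasDerivAt

theorem uncurry_pt (hf : Differentiable ℝ (uncurry f)) :
    uncurry (pt f) = fun p => fderiv ℝ (uncurry f) p (1, 0) :=
  funext fun p => (hasDerivAt_fst_of_uncurry (hf p)).deriv

theorem uncurry_px (hf : Differentiable ℝ (uncurry f)) :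
    uncurry (px f) = fun p => fderiv ℝ (uncurry f) p (0, 1) :=
  funext fun p => (hasDerivAt_snd_of_uncurry (hf p)).deriv

theorem contDiff_pt {n : WithTop ℕ∞} (hf : ContDiff ℝ (n + 1) (uncurry f)) :
    ContDiff ℝ n (uncurry (pt f)) := by
  rw [uncurry_pt (hf.differentiable (by simp))]
  exact (hf.fderiv_right le_rfl).clm_apply contDiff_const

theorem contDiff_px {n : WithTop ℕ∞} (hf : ContDiff ℝ (n + 1) (uncurry f)) :
    ContDiff ℝ n (uncurry (px f)) := by
  rw [uncurry_px (hf.differentiable (by simp))]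
  exact (hf.fderiv_right le_rfl).clm_apply contDiff_const

theorem px_pt_comm (hf : ContDiff ℝ 2 (uncurry f)) (t x : ℝ) :
    px (pt f) t x = pt (px f) t x := by
  have hf₁ : Differentiable ℝ (uncurry f) := hf.differentiable two_ne_zero
  have hf₂ : DifferentiableAt ℝ (fderiv ℝ (uncurry f)) (t, x) :=
    (hf.fderiv_right (m := 1) one_add_one_eq_two.le).differentiable_one (t, x)
  have hsymm : IsSymmSndFDerivAt ℝ (uncurry f) (t, x) :=
    hf.contDiffAt.isSymmSndFDerivAt (by simp)
  have hxt : px (pt f) t x = fderiv ℝ (uncurry (pt f)) (t, x) (0, 1) :=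
    (hasDerivAt_snd_of_uncurry
      ((contDiff_pt (n := 1) hf).differentiable_one (t, x))).deriv
  have htx : pt (px f) t x = fderiv ℝ (uncurry (px f)) (t, x) (1, 0) :=
    (hasDerivAt_fst_of_uncurry
      ((contDiff_px (n := 1) hf).differentiable_one (t, x))).deriv
  rw [hxt, htx, uncurry_pt hf₁, uncurry_px hf₁,
    fderiv_clm_apply hf₂ (differentiableAt_const _),
    fderiv_clm_apply hf₂ (differentiableAt_const _)]
  simpa using hsymm (0, 1) (1, 0)

end PartialDerivatives

section EnergyBalance

/-- The left-hand side `m_t + f(u, u_x) m + ∂_x (g(u, u_x) m)` of the multi-peakon equation with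
coefficients `f` and `g`, as a function of `(t, x)`. -/
def multiPeakonOp (f g u : ℝ → ℝ → ℝ) (t x : ℝ) : ℝ :=
  pt (mf u) t x + f (u t x) (px u t x) * mf u t x
    + px (fun t' x' => g (u t' x') (px u t' x') * mf u t' x') t x

variable {f g u Ψ : ℝ → ℝ → ℝ} {t x : ℝ}

theorem contDiff_mf {n : WithTop ℕ∞} (hu : ContDiff ℝ (n + 2) (uncurry u)) :
    ContDiff ℝ n (uncurry (mf u)) := by
  rw [← one_add_one_eq_two, ← add_assoc] at hu
  exact (hu.of_le (le_self_add.trans le_self_add)).sub (contDiff_px (contDiff_px hu))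

theorem pt_mf (hu : ContDiff ℝ 3 (uncurry u)) :
    pt (mf u) t x = pt u t x - px (pt (px u)) t x := by
  have hux : ContDiff ℝ 2 (uncurry (px u)) := contDiff_px hu
  have huxx : ContDiff ℝ 1 (uncurry (px (px u))) := contDiff_px hux
  rw [px_pt_comm hux]
  exact ((hasDerivAt_pt (hu.differentiable three_ne_zero _)).sub
    (hasDerivAt_pt (huxx.differentiable_one _))).deriv

theorem pt_sq_add_sq {v w : ℝ → ℝ → ℝ} (hv : DifferentiableAt ℝ (uncurry v) (t, x))
    (hw : DifferentiableAt ℝ (uncurry w) (t, x)) :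
    pt (fun t' x' => v t' x' ^ 2 + w t' x' ^ 2) t x
      = 2 * v t x * pt v t x + 2 * w t x * pt w t x := by
  refine (((hasDerivAt_pt hv).pow 2).add ((hasDerivAt_pt hw).pow 2)).deriv.trans ?_
  norm_num

theorem pt_add_px_eq_mul_multiPeakonOp (hu : ContDiff ℝ 3 (uncurry u))
    (hg : DifferentiableAt ℝ (uncurry g) (u t x, px u t x))
    (hΨ : HasDerivAt (Ψ t) (2 * (u t x * f (u t x) (px u t x) - px u t x * g (u t x) (px u t x))
      * mf u t x) x) :
    pt (fun t' x' => u t' x' ^ 2 + px u t' x' ^ 2) t x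
      + px (fun t' x' => -2 * u t' x' * pt (px u) t' x'
          + 2 * u t' x' * (g (u t' x') (px u t' x') * mf u t' x') + Ψ t' x') t x
      = 2 * u t x * multiPeakonOp f g u t x := by
  have hux : ContDiff ℝ 2 (uncurry (px u)) := contDiff_px hu
  have hu' := hu.differentiable three_ne_zero (t, x)
  have hux' := hux.differentiable two_ne_zero (t, x)
  have hutx' := (contDiff_pt (n := 1) hux).differentiable_one (t, x)
  have hm' := (contDiff_mf (n := 1) hu).differentiable_one (t, x)
  have hgm : HasDerivAt (fun y => g (u t y) (px u t y) * mf u t y)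
      (px (fun t' x' => g (u t' x') (px u t' x') * mf u t' x') t x) x :=
    ((hg.comp x ((hasDerivAt_px hu').prodMk (hasDerivAt_px hux')).differentiableAt).mul
      (hasDerivAt_px hm').differentiableAt).hasDerivAt
  have hflux := ((((hasDerivAt_px hu').const_mul (-2)).mul (hasDerivAt_px hutx')).add
    (((hasDerivAt_px hu').const_mul 2).mul hgm)).add hΨ
  rw [pt_sq_add_sq hu' hux', multiPeakonOp, pt_mf hu]
  refine (congrArg _ hflux.deriv).trans ?_
  ring

end EnergyBalance

section FluxPotential

variable {a b H1 h1 : ℝ → ℝ} {b' x : ℝ}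

theorem hasDerivAt_sq_sub_sq (ha : HasDerivAt a (b x) x) (hb : HasDerivAt b b' x) :
    HasDerivAt (fun y => a y ^ 2 - b y ^ 2) (2 * b x * (a x - b')) x := by
  refine ((ha.pow 2).sub (hb.pow 2)).congr_deriv ?_
  simp only [Nat.cast_ofNat, Nat.add_one_sub_one, pow_one]
  ring

theorem hasDerivAt_log_sub_div_add (ha : HasDerivAt a (b x) x) (hb : HasDerivAt b b' x)
    (hab : a x ^ 2 - b x ^ 2 ≠ 0) :
    HasDerivAt (fun y => log ((a y - b y) / (a y + b y)))
      (2 * a x * (a x - b') / (a x ^ 2 - b x ^ 2) - 2) x := by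
  rw [sq_sub_sq] at hab ⊢
  obtain ⟨hadd, hsub⟩ := mul_ne_zero_iff.mp hab
  refine (((ha.sub hb).div (ha.add hb) hadd).log (div_ne_zero hsub hadd)).congr_deriv ?_
  simp only [Pi.add_apply, Pi.sub_apply, Pi.div_apply]
  field_simp
  ring

theorem hasDerivAt_fluxPotential (h0 : ℝ) (ha : HasDerivAt a (b x) x) (hb : HasDerivAt b b' x)
    (hab : a x ^ 2 - b x ^ 2 ≠ 0)
    (hH1 : HasDerivAt H1 (h1 (a x ^ 2 - b x ^ 2)) (a x ^ 2 - b x ^ 2)) :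
    HasDerivAt
      (fun y => H1 (a y ^ 2 - b y ^ 2) + h0 * log ((a y - b y) / (a y + b y)) + 2 * h0 * y)
      (2 * (b x * h1 (a x ^ 2 - b x ^ 2) + h0 * a x / (a x ^ 2 - b x ^ 2)) * (a x - b')) x := by
  refine (((hH1.comp x (hasDerivAt_sq_sub_sq ha hb)).add
    ((hasDerivAt_log_sub_div_add ha hb hab).const_mul h0)).add
    ((hasDerivAt_id x).const_mul (2 * h0))).congr_deriv ?_
  ring

end FluxPotential

section Conservation

/-- The coefficient `f(a, b)` of the family of multi-peakon equations conserving the `H¹` density,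
with `a`, `b` standing for `u`, `u_x`. -/
def peakonCoeffF (h : ℝ → ℝ → ℝ) (h1 : ℝ → ℝ) (h0 a b : ℝ) : ℝ :=
  b * h a b + (1/2) * b * h1 (a ^ 2 - b ^ 2) / a + (1/2) * h0 / (a ^ 2 - b ^ 2)

/-- The coefficient `g(a, b)` of the family of multi-peakon equations conserving the `H¹` density,
with `a`, `b` standing for `u`, `u_x`. -/
def peakonCoeffG (h : ℝ → ℝ → ℝ) (h1 : ℝ → ℝ) (h0 a b : ℝ) : ℝ :=
  a * h a b - (1/2) * h1 (a ^ 2 - b ^ 2) - (1/2) * h0 * a / (b * (a ^ 2 - b ^ 2))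

/-- The spatial flux `Φ` of the `H¹` density `u² + u_x²`. -/
def h1Flux (h : ℝ → ℝ → ℝ) (h1 H1 : ℝ → ℝ) (h0 : ℝ) (u : ℝ → ℝ → ℝ) (t x : ℝ) : ℝ :=
  -2 * u t x * pt (px u) t x
    + 2 * u t x ^ 2 * h (u t x) (px u t x) * mf u t x
    - u t x * h1 (u t x ^ 2 - px u t x ^ 2) * mf u t x
    - h0 * u t x ^ 2 * mf u t x / (px u t x * (u t x ^ 2 - px u t x ^ 2))
    + H1 (u t x ^ 2 - px u t x ^ 2)
    + h0 * log ((u t x - px u t x) / (u t x + px u t x))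
    + 2 * h0 * x

variable {h : ℝ → ℝ → ℝ} {h1 H1 : ℝ → ℝ} {h0 a b : ℝ} {u : ℝ → ℝ → ℝ} {t x : ℝ}

theorem mul_peakonCoeffF_sub_mul_peakonCoeffG (ha : a ≠ 0) (hb : b ≠ 0) :
    a * peakonCoeffF h h1 h0 a b - b * peakonCoeffG h h1 h0 a b
      = b * h1 (a ^ 2 - b ^ 2) + h0 * a / (a ^ 2 - b ^ 2) := by
  unfold peakonCoeffF peakonCoeffG
  field_simp
  ring

theorem differentiableAt_peakonCoeffG (hh : DifferentiableAt ℝ (uncurry h) (a, b))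
    (hh1 : DifferentiableAt ℝ h1 (a ^ 2 - b ^ 2)) (hb : b ≠ 0) (hab : a ^ 2 - b ^ 2 ≠ 0) :
    DifferentiableAt ℝ (uncurry (peakonCoeffG h h1 h0)) (a, b) := by
  have : DifferentiableAt ℝ (fun p : ℝ × ℝ => h1 (p.1 ^ 2 - p.2 ^ 2)) (a, b) :=
    hh1.comp (a, b) (by fun_prop)
  have hden : b * (a ^ 2 - b ^ 2) ≠ 0 := mul_ne_zero hb hab
  change DifferentiableAt ℝ (fun p : ℝ × ℝ => p.1 * uncurry h p - (1/2) * h1 (p.1 ^ 2 - p.2 ^ 2)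
    - (1/2) * h0 * p.1 / (p.2 * (p.1 ^ 2 - p.2 ^ 2))) (a, b)
  fun_prop (disch := assumption)

theorem h1Flux_eq : h1Flux h h1 H1 h0 u = fun t x =>
    -2 * u t x * pt (px u) t x
      + 2 * u t x * (peakonCoeffG h h1 h0 (u t x) (px u t x) * mf u t x)
      + (H1 (u t x ^ 2 - px u t x ^ 2) + h0 * log ((u t x - px u t x) / (u t x + px u t x))
        + 2 * h0 * x) := by
  funext t x
  unfold h1Flux peakonCoeffG
  ring

theorem H1_conservation_general (hh : Differentiable ℝ (uncurry h)) (hh1 : Differentiable ℝ h1)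
    (hH1 : ∀ y, HasDerivAt H1 (h1 y) y) (hu : ContDiff ℝ 3 (uncurry u))
    (hlt : |px u t x| < |u t x|) (hux_ne : px u t x ≠ 0)
    (heq : multiPeakonOp (peakonCoeffF h h1 h0) (peakonCoeffG h h1 h0) u t x = 0) :
    pt (fun t' x' => u t' x' ^ 2 + px u t' x' ^ 2) t x + px (h1Flux h h1 H1 h0 u) t x = 0 := by
  have hu_ne : u t x ≠ 0 := abs_pos.mp ((abs_nonneg _).trans_lt hlt)
  have hsq_ne : u t x ^ 2 - px u t x ^ 2 ≠ 0 := (sub_pos.mpr (sq_lt_sq.mpr hlt)).ne'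
  have hux : ContDiff ℝ 2 (uncurry (px u)) := contDiff_px hu
  have hpotential := hasDerivAt_fluxPotential h0 (hasDerivAt_px (hu.differentiable three_ne_zero _))
    (hasDerivAt_px (hux.differentiable two_ne_zero _)) hsq_ne (hH1 _)
  rw [← mul_peakonCoeffF_sub_mul_peakonCoeffG (h := h) hu_ne hux_ne] at hpotential
  have hg := differentiableAt_peakonCoeffG (h0 := h0) (hh _) (hh1 _) hux_ne hsq_ne
  rw [h1Flux_eq, pt_add_px_eq_mul_multiPeakonOp hu hg hpotential, heq, mul_zero]

end Conservation

/-- conservation of the H¹ density `u² + u_x²`. -/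
theorem H1_conservation
    (h : ℝ → ℝ → ℝ) (hh : ContDiff ℝ (⊤ : ℕ∞) (Function.uncurry h))
    (h1 : ℝ → ℝ) (hh1 : ContDiff ℝ (⊤ : ℕ∞) h1)
    (H1 : ℝ → ℝ) (hH1 : ∀ y : ℝ, H1 y = ∫ s in (0:ℝ)..y, h1 s)
    (h0 : ℝ)
    (u : ℝ → ℝ → ℝ) (hu : ContDiff ℝ (⊤ : ℕ∞) (Function.uncurry u))
    (hpos : ∀ t x : ℝ, u t x > |px u t x| ∧ |px u t x| > 0)
    (heq : ∀ t x : ℝ,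
      pt (mf u) t x
        + (px u t x * h (u t x) (px u t x)
            + (1/2) * px u t x * h1 ((u t x)^2 - (px u t x)^2) / u t x
            + (1/2) * h0 / ((u t x)^2 - (px u t x)^2)) * mf u t x
        + px (fun t' x' =>
            (u t' x' * h (u t' x') (px u t' x')
              - (1/2) * h1 ((u t' x')^2 - (px u t' x')^2)
              - (1/2) * h0 * u t' x'
                  / (px u t' x' * ((u t' x')^2 - (px u t' x')^2))) * mf u t' x') t x
        = 0) :
    ∀ t x : ℝ,
      pt (fun t' x' => (u t' x')^2 + (px u t' x')^2) t x
        + px (fun t' x' =>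
            -2 * u t' x' * pt (px u) t' x'
              + 2 * (u t' x')^2 * h (u t' x') (px u t' x') * mf u t' x'
              - u t' x' * h1 ((u t' x')^2 - (px u t' x')^2) * mf u t' x'
              - h0 * (u t' x')^2 * mf u t' x'
                  / (px u t' x' * ((u t' x')^2 - (px u t' x')^2))
              + H1 ((u t' x')^2 - (px u t' x')^2)
              + h0 * Real.log ((u t' x' - px u t' x') / (u t' x' + px u t' x'))
              + 2 * h0 * x') t x = 0 := by
  have hH1' (y : ℝ) : HasDerivAt H1 (h1 y) y :=
    funext hH1 ▸ (hh1.continuous.integral_hasStrictDerivAt 0 y).hasDerivAt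
  exact fun t x => H1_conservation_general (hh.differentiable (by simp))
    (hh1.differentiable (by simp)) hH1' (mod_cast contDiff_infty.mp hu 3)
    ((hpos t x).1.trans_le (le_abs_self _)) (abs_pos.mp (hpos t x).2) (heq t x)

end
end

section
/- Let h : ℝ → ℝ be any smooth function. Let u : ℝ² → ℝ be a smooth function of (t,x), set m = u − u_xx, and suppose that at every point m_t − (1/2) u_x h'(u) m + ∂_x( h(u) m ) = 0. Then at every point ∂_t( m² ) + ∂_x( h(u) m² ) = 0; that is, the L² density m² of m satisfies a local conservation law for this whole family of equations. -/
open Real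

noncomputable section

/-!
With `c = h(u)` the equation reads `m_t + (c m)_x = (1/2) c_x m`. Multiplying a continuity equation
by `F'(m)` turns it into the equation for the density `F(m)`, up to the defect
`(F(m) - m F'(m)) c_x`. For `F(m) = m²` the defect is `-m² c_x`, which is exactly cancelled by the
contribution `2m · (1/2) c_x m` of the source term.
-/

section PartialDerivatives

variable {f : ℝ → ℝ → ℝ} {t x : ℝ}

theorem differentiableAt_time_slice (hf : DifferentiableAt ℝ (Function.uncurry f) (t, x)) :
    DifferentiableAt ℝ (fun s => f s x) t :=
  hf.comp t (f := fun s => (s, x)) (by fun_prop)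

theorem differentiableAt_space_slice (hf : DifferentiableAt ℝ (Function.uncurry f) (t, x)) :
    DifferentiableAt ℝ (f t) x :=
  hf.comp x (f := fun y => (t, y)) (by fun_prop)

theorem px_eq_fderiv_uncurry (hf : DifferentiableAt ℝ (Function.uncurry f) (t, x)) :
    px f t x = fderiv ℝ (Function.uncurry f) (t, x) (0, 1) :=
  (hf.hasFDerivAt.comp_hasDerivAt x ((hasDerivAt_const x t).prodMk (hasDerivAt_id x))).deriv

theorem contDiff_uncurry_px {n : WithTop ℕ∞} (hf : ContDiff ℝ (n + 1) (Function.uncurry f)) :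
    ContDiff ℝ n (Function.uncurry (px f)) := by
  have hpx : Function.uncurry (px f) = fun p => fderiv ℝ (Function.uncurry f) p (0, 1) :=
    funext fun p => px_eq_fderiv_uncurry (hf.differentiable (by simp) p)
  rw [hpx]
  exact (hf.fderiv_right le_rfl).clm_apply contDiff_const

theorem contDiff_uncurry_mf {n : WithTop ℕ∞} (hf : ContDiff ℝ (n + 2) (Function.uncurry f)) :
    ContDiff ℝ n (Function.uncurry (mf f)) := by
  have hf' : ContDiff ℝ (n + 1 + 1) (Function.uncurry f) := by
    rwa [add_assoc, one_add_one_eq_two]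
  exact (hf.of_le le_self_add).sub (contDiff_uncurry_px (contDiff_uncurry_px hf'))

theorem pt_comp {F : ℝ → ℝ} (hF : DifferentiableAt ℝ F (f t x))
    (hf : DifferentiableAt ℝ (fun s => f s x) t) :
    pt (fun t' x' => F (f t' x')) t x = deriv F (f t x) * pt f t x :=
  deriv_comp t hF hf

theorem px_comp {F : ℝ → ℝ} (hF : DifferentiableAt ℝ F (f t x))
    (hf : DifferentiableAt ℝ (f t) x) :
    px (fun t' x' => F (f t' x')) t x = deriv F (f t x) * px f t x :=
  deriv_comp x hF hf

theorem px_mul {g : ℝ → ℝ → ℝ} (hf : DifferentiableAt ℝ (f t) x)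
    (hg : DifferentiableAt ℝ (g t) x) :
    px (fun t' x' => f t' x' * g t' x') t x = px f t x * g t x + f t x * px g t x :=
  deriv_fun_mul hf hg

end PartialDerivatives

section ConservationLaws

variable {c m : ℝ → ℝ → ℝ} {t x : ℝ}

/-- The renormalization identity of DiPerna and Lions. -/
theorem pt_comp_add_px_mul_comp {F : ℝ → ℝ} (hF : DifferentiableAt ℝ F (m t x))
    (hc : DifferentiableAt ℝ (c t) x) (hmt : DifferentiableAt ℝ (fun s => m s x) t)
    (hmx : DifferentiableAt ℝ (m t) x) :
    pt (fun t' x' => F (m t' x')) t x + px (fun t' x' => c t' x' * F (m t' x')) t x =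
      deriv F (m t x) * (pt m t x + px (fun t' x' => c t' x' * m t' x') t x) +
        (F (m t x) - m t x * deriv F (m t x)) * px c t x := by
  rw [pt_comp hF hmt, px_mul (g := fun t' x' => F (m t' x')) hc (hF.comp x hmx), px_comp hF hmx,
    px_mul hc hmx]
  ring

theorem pt_sq_add_px_mul_sq (hc : DifferentiableAt ℝ (c t) x)
    (hmt : DifferentiableAt ℝ (fun s => m s x) t) (hmx : DifferentiableAt ℝ (m t) x) :
    pt (fun t' x' => m t' x' ^ 2) t x + px (fun t' x' => c t' x' * m t' x' ^ 2) t x =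
      2 * m t x *
        (pt m t x - 1 / 2 * px c t x * m t x + px (fun t' x' => c t' x' * m t' x') t x) := by
  have hsq : deriv (fun z : ℝ => z ^ 2) (m t x) = 2 * m t x := by simp
  rw [pt_comp_add_px_mul_comp (F := fun z => z ^ 2) (by fun_prop) hc hmt hmx, hsq]
  ring

theorem L2_conservation_family_general {h : ℝ → ℝ} {u : ℝ → ℝ → ℝ}
    (hh : DifferentiableAt ℝ h (u t x)) (hu : DifferentiableAt ℝ (u t) x)
    (hmt : DifferentiableAt ℝ (fun s => m s x) t) (hmx : DifferentiableAt ℝ (m t) x)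
    (heq : pt m t x - 1 / 2 * px u t x * deriv h (u t x) * m t x
      + px (fun t' x' => h (u t' x') * m t' x') t x = 0) :
    pt (fun t' x' => m t' x' ^ 2) t x + px (fun t' x' => h (u t' x') * m t' x' ^ 2) t x = 0 := by
  rw [pt_sq_add_px_mul_sq (c := fun t' x' => h (u t' x')) (hh.comp x hu) hmt hmx, px_comp hh hu]
  linear_combination 2 * m t x * heq

end ConservationLaws

/-- the L² density `m²` is conserved for the family
`m_t - (1/2) u_x h'(u) m + ∂_x(h(u) m) = 0`. -/
theorem L2_conservation_family
    (h : ℝ → ℝ) (hh : ContDiff ℝ (⊤ : ℕ∞) h)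
    (u : ℝ → ℝ → ℝ) (hu : ContDiff ℝ (⊤ : ℕ∞) (Function.uncurry u))
    (heq : ∀ t x : ℝ,
      pt (mf u) t x
        - (1/2) * px u t x * deriv h (u t x) * mf u t x
        + px (fun t' x' => h (u t' x') * mf u t' x') t x = 0) :
    ∀ t x : ℝ,
      pt (fun t' x' => (mf u t' x')^2) t x
        + px (fun t' x' => h (u t' x') * (mf u t' x')^2) t x = 0 := by
  intro t x
  have hm : DifferentiableAt ℝ (Function.uncurry (mf u)) (t, x) :=
    (contDiff_uncurry_mf hu).differentiable (n := (⊤ : ℕ∞)) (by simp) _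
  exact L2_conservation_family_general (hh.differentiable (by simp) _)
    (differentiableAt_space_slice (hu.differentiable (by simp) _))
    (differentiableAt_time_slice hm) (differentiableAt_space_slice hm) (heq t x)

end
end

section
/- Let h : ℝ → ℝ be smooth, let T ∈ (0,∞], and let u : [0,T) × ℝ → ℝ be a smooth function of (t,x) with m := u − u_xx satisfying, at every point, m_t − (1/2) u_x h'(u) m + ∂_x( h(u) m ) = 0. Assume that for each t ∈ [0,T) the functions x ↦ u(t,x), x ↦ u_x(t,x), x ↦ u_xx(t,x) are square-integrable on ℝ, that u(t,·) is not identically zero, and that the L² norm of m is conserved: ∫_ℝ m(t,x)² dx = ∫_ℝ m(0,x)² dx for all t ∈ [0,T). Then for all t ∈ [0,T) and all x ∈ ℝ, 2 u(t,x)² < ∫_ℝ m(0,y)² dy and 2 u_x(t,x)² < ∫_ℝ m(0,y)² dy; that is, the amplitude and the gradient of the solution are a priori bounded by the L² norm of the initial datum m(0,·). -/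
open Real MeasureTheory

noncomputable section

/-!
Conservation reduces both bounds to the time slice `f = u(t, ·)`. Integrating by parts,
`‖f - f''‖² = ‖f‖² + 2‖f'‖² + ‖f''‖²` in `L²(ℝ)`. On the other hand a function `g` with `g` and
`g'` in `L²(ℝ)` satisfies `2 |g(x)|² ≤ ∫ |(g²)'| ≤ ‖g‖² + ‖g'‖²`, because `g²` is recovered by
integrating its derivative from either end of the line. Taking `g = f` and `g = f'` leaves a
surplus of at least `‖f'‖²` and `‖f‖²` respectively, and neither vanishes when `f ≠ 0`.
-/

open scoped RealInnerProductSpace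

section NormedSpace

variable {E : Type*} [NormedAddCommGroup E]

lemma integral_norm_sq_pos_of_continuous {α : Type*} [TopologicalSpace α] [MeasurableSpace α]
    {μ : Measure α} [μ.IsOpenPosMeasure] {f : α → E} (hf : Continuous f) (hf2 : MemLp f 2 μ)
    (hne : f ≠ 0) : 0 < ∫ x, ‖f x‖ ^ 2 ∂μ := by
  obtain ⟨x, hx⟩ := Function.ne_iff.1 hne
  exact integral_pos_of_integrable_nonneg_nonzero (by fun_prop)
    (hf2.integrable_norm_pow two_ne_zero) (fun y => sq_nonneg ‖f y‖)
    (pow_ne_zero 2 (norm_ne_zero_iff.2 hx))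

variable [NormedSpace ℝ E] {f : ℝ → E}

lemma deriv_ne_zero_of_memLp {p : ENNReal} (hp_ne_zero : p ≠ 0) (hp_ne_top : p ≠ ⊤)
    (hf : Differentiable ℝ f) (hfp : MemLp f p) (hne : f ≠ 0) : deriv f ≠ 0 := by
  intro hderiv
  have hconst : f = fun _ => f 0 :=
    funext fun x => is_const_of_deriv_eq_zero hf (congrFun hderiv) x 0
  rw [hconst, memLp_const_iff hp_ne_zero hp_ne_top] at hfp
  have hf0 : f 0 = 0 := hfp.resolve_right (by simp)
  exact hne (hconst.trans (funext fun _ => hf0))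

lemma two_mul_norm_le_integral_norm_of_hasDerivAt [CompleteSpace E] {f' : ℝ → E}
    (hderiv : ∀ x, HasDerivAt f (f' x) x) (hf : Integrable f) (hf' : Integrable f') (x : ℝ) :
    2 * ‖f x‖ ≤ ∫ y, ‖f' y‖ := by
  have hleft : ∫ y in Set.Iic x, f' y = f x - 0 :=
    integral_Iic_of_hasDerivAt_of_tendsto' (fun y _ => hderiv y) hf'.integrableOn
      (tendsto_zero_of_hasDerivAt_of_integrableOn_Iic (a := x) (fun y _ => hderiv y)
        hf'.integrableOn hf.integrableOn)
  have hright : ∫ y in Set.Ioi x, f' y = 0 - f x :=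
    integral_Ioi_of_hasDerivAt_of_tendsto' (fun y _ => hderiv y) hf'.integrableOn
      (tendsto_zero_of_hasDerivAt_of_integrableOn_Ioi (a := x) (fun y _ => hderiv y)
        hf'.integrableOn hf.integrableOn)
  calc 2 * ‖f x‖ = ‖∫ y in Set.Iic x, f' y‖ + ‖∫ y in Set.Ioi x, f' y‖ := by
        rw [hleft, hright, sub_zero, zero_sub, norm_neg, two_mul]
    _ ≤ (∫ y in Set.Iic x, ‖f' y‖) + ∫ y in Set.Ioi x, ‖f' y‖ :=
        add_le_add (norm_integral_le_integral_norm _) (norm_integral_le_integral_norm _)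
    _ = ∫ y, ‖f' y‖ :=
        intervalIntegral.integral_Iic_add_Ioi hf'.norm.integrableOn hf'.norm.integrableOn

end NormedSpace

section InnerProductSpace

variable {E : Type*} [NormedAddCommGroup E] [InnerProductSpace ℝ E]

lemma integrable_inner_of_memLp_two {α : Type*} [MeasurableSpace α] {μ : Measure α} {f g : α → E}
    (hf : MemLp f 2 μ) (hg : MemLp g 2 μ) : Integrable (fun x => ⟪f x, g x⟫) μ :=
  memLp_one_iff_integrable.1 ((innerSL ℝ).memLp_of_bilin 1 hf hg)

lemma norm_two_mul_inner_le_norm_sq_add_norm_sq (v w : E) :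
    ‖2 * ⟪v, w⟫‖ ≤ ‖v‖ ^ 2 + ‖w‖ ^ 2 :=
  calc ‖2 * ⟪v, w⟫‖ = 2 * ‖⟪v, w⟫‖ := by rw [norm_mul, Real.norm_two]
    _ ≤ 2 * (‖v‖ * ‖w‖) := by gcongr; exact norm_inner_le_norm v w
    _ = 2 * ‖v‖ * ‖w‖ := (mul_assoc _ _ _).symm
    _ ≤ ‖v‖ ^ 2 + ‖w‖ ^ 2 := two_mul_le_add_sq _ _

variable {f : ℝ → E}

lemma two_mul_norm_sq_le_integral_norm_sq_add (hf : Differentiable ℝ f)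
    (hf2 : MemLp f 2) (hf'2 : MemLp (deriv f) 2) (x : ℝ) :
    2 * ‖f x‖ ^ 2 ≤ (∫ y, ‖f y‖ ^ 2) + ∫ y, ‖deriv f y‖ ^ 2 := by
  have hfi := hf2.integrable_norm_pow two_ne_zero
  have hf'i := hf'2.integrable_norm_pow two_ne_zero
  have hinner : Integrable fun y => 2 * ⟪f y, deriv f y⟫ :=
    (integrable_inner_of_memLp_two hf2 hf'2).const_mul 2
  calc 2 * ‖f x‖ ^ 2 = 2 * ‖‖f x‖ ^ 2‖ := by rw [norm_pow, norm_norm]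
    _ ≤ ∫ y, ‖2 * ⟪f y, deriv f y⟫‖ :=
        two_mul_norm_le_integral_norm_of_hasDerivAt (fun y => (hf y).hasDerivAt.norm_sq)
          hfi hinner x
    _ ≤ ∫ y, (‖f y‖ ^ 2 + ‖deriv f y‖ ^ 2) :=
        integral_mono hinner.norm (hfi.add hf'i) fun y =>
          norm_two_mul_inner_le_norm_sq_add_norm_sq (f y) (deriv f y)
    _ = (∫ y, ‖f y‖ ^ 2) + ∫ y, ‖deriv f y‖ ^ 2 := integral_add hfi hf'i

variable (hf : Differentiable ℝ f) (hf' : Differentiable ℝ (deriv f)) (hf2 : MemLp f 2)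
  (hf'2 : MemLp (deriv f) 2) (hf''2 : MemLp (deriv (deriv f)) 2)

include hf hf' hf2 hf'2 hf''2

lemma integral_inner_deriv_deriv :
    ∫ x, ⟪f x, deriv (deriv f) x⟫ = -∫ x, ‖deriv f x‖ ^ 2 := by
  simp only [← real_inner_self_eq_norm_sq]
  exact integral_bilinear_hasDerivAt_right_eq_neg_left_of_integrable (L := innerSL ℝ)
    (fun x _ => (hf x).hasDerivAt) (fun x _ => (hf' x).hasDerivAt)
    (integrable_inner_of_memLp_two hf2 hf''2) (integrable_inner_of_memLp_two hf'2 hf'2)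
    (integrable_inner_of_memLp_two hf2 hf'2)

lemma integral_norm_sub_deriv_deriv_sq :
    ∫ x, ‖f x - deriv (deriv f) x‖ ^ 2 =
      (∫ x, ‖f x‖ ^ 2) + 2 * (∫ x, ‖deriv f x‖ ^ 2) + ∫ x, ‖deriv (deriv f) x‖ ^ 2 := by
  have hfi := hf2.integrable_norm_pow two_ne_zero
  have hf''i := hf''2.integrable_norm_pow two_ne_zero
  have hinner := (integrable_inner_of_memLp_two hf2 hf''2).const_mul 2
  have hsub : Integrable fun x => ‖f x‖ ^ 2 - 2 * ⟪f x, deriv (deriv f) x⟫ := hfi.sub hinner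
  simp only [norm_sub_sq_real]
  rw [integral_add hsub hf''i, integral_sub hfi hinner, integral_const_mul,
    integral_inner_deriv_deriv hf hf' hf2 hf'2 hf''2]
  ring

lemma two_mul_norm_sq_lt_integral_norm_sub_deriv_deriv_sq (hne : f ≠ 0) (x : ℝ) :
    2 * ‖f x‖ ^ 2 < ∫ y, ‖f y - deriv (deriv f) y‖ ^ 2 := by
  have hbound := two_mul_norm_sq_le_integral_norm_sq_add hf hf2 hf'2 x
  have hpos : 0 < ∫ y, ‖deriv f y‖ ^ 2 :=
    integral_norm_sq_pos_of_continuous hf'.continuous hf'2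
      (deriv_ne_zero_of_memLp two_ne_zero ENNReal.ofNat_ne_top hf hf2 hne)
  have hnonneg : 0 ≤ ∫ y, ‖deriv (deriv f) y‖ ^ 2 := integral_nonneg fun y => sq_nonneg _
  rw [integral_norm_sub_deriv_deriv_sq hf hf' hf2 hf'2 hf''2]
  linarith

lemma two_mul_norm_deriv_sq_lt_integral_norm_sub_deriv_deriv_sq (hne : f ≠ 0) (x : ℝ) :
    2 * ‖deriv f x‖ ^ 2 < ∫ y, ‖f y - deriv (deriv f) y‖ ^ 2 := by
  have hbound := two_mul_norm_sq_le_integral_norm_sq_add hf' hf'2 hf''2 x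
  have hpos : 0 < ∫ y, ‖f y‖ ^ 2 := integral_norm_sq_pos_of_continuous hf.continuous hf2 hne
  have hnonneg : 0 ≤ ∫ y, ‖deriv f y‖ ^ 2 := integral_nonneg fun y => sq_nonneg _
  rw [integral_norm_sub_deriv_deriv_sq hf hf' hf2 hf'2 hf''2]
  linarith

end InnerProductSpace

lemma contDiff_of_contDiffOn_uncurry {𝕜 E F G : Type*} [NontriviallyNormedField 𝕜]
    [NormedAddCommGroup E] [NormedSpace 𝕜 E] [NormedAddCommGroup F] [NormedSpace 𝕜 F]
    [NormedAddCommGroup G] [NormedSpace 𝕜 G] {n : WithTop ℕ∞} {f : E → F → G} {s : Set (E × F)}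
    (hf : ContDiffOn 𝕜 n (Function.uncurry f) s) {a : E} (ha : ∀ y, (a, y) ∈ s) :
    ContDiff 𝕜 n (f a) :=
  contDiffOn_univ.1 (hf.comp (g := Function.uncurry f) (f := fun y => (a, y)) (by fun_prop)
    fun y _ => ha y)

theorem amplitude_and_gradient_bounds_general (u : ℝ → ℝ → ℝ) (t : ℝ)
    (hu : Differentiable ℝ (u t)) (hux : Differentiable ℝ (px u t))
    (hu2 : Integrable fun x => (u t x) ^ 2) (hux2 : Integrable fun x => (px u t x) ^ 2)
    (huxx2 : Integrable fun x => (px (px u) t x) ^ 2) (hne : u t ≠ 0)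
    (hle : ∫ x, (mf u t x) ^ 2 ≤ ∫ x, (mf u 0 x) ^ 2) (x : ℝ) :
    2 * (u t x) ^ 2 < ∫ y, (mf u 0 y) ^ 2 ∧ 2 * (px u t x) ^ 2 < ∫ y, (mf u 0 y) ^ 2 := by
  have hL2 : MemLp (u t) 2 :=
    (memLp_two_iff_integrable_sq hu.continuous.aestronglyMeasurable).2 hu2
  have hxL2 : MemLp (deriv (u t)) 2 :=
    (memLp_two_iff_integrable_sq (aestronglyMeasurable_deriv _ _)).2 hux2
  have hxxL2 : MemLp (deriv (deriv (u t))) 2 :=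
    (memLp_two_iff_integrable_sq (aestronglyMeasurable_deriv _ _)).2 huxx2
  have hamplitude :=
    two_mul_norm_sq_lt_integral_norm_sub_deriv_deriv_sq hu hux hL2 hxL2 hxxL2 hne x
  have hgradient :=
    two_mul_norm_deriv_sq_lt_integral_norm_sub_deriv_deriv_sq hu hux hL2 hxL2 hxxL2 hne x
  simp only [Real.norm_eq_abs, sq_abs] at hamplitude hgradient
  exact ⟨hamplitude.trans_le hle, hgradient.trans_le hle⟩

/-- a priori bounds on the amplitude and gradient of solutions of
`m_t - (1/2) u_x h'(u) m + ∂_x(h(u) m) = 0` on `[0,T) × ℝ` (with `T ∈ (0,∞]`)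
in terms of the conserved L² norm of the initial datum `m(0,·)`. -/
theorem amplitude_and_gradient_bounds
    (h : ℝ → ℝ) (hh : ContDiff ℝ (⊤ : ℕ∞) h)
    (T : EReal) (hT : 0 < T)
    (u : ℝ → ℝ → ℝ)
    (hu : ContDiffOn ℝ (⊤ : ℕ∞) (Function.uncurry u)
      {p : ℝ × ℝ | 0 ≤ p.1 ∧ (p.1 : EReal) < T})
    (heq : ∀ t x : ℝ, 0 ≤ t → (t : EReal) < T →
      pt (mf u) t x
        - (1/2) * px u t x * deriv h (u t x) * mf u t x
        + px (fun t' x' => h (u t' x') * mf u t' x') t x = 0)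
    (hu2 : ∀ t : ℝ, 0 ≤ t → (t : EReal) < T → Integrable (fun x => (u t x)^2))
    (hux2 : ∀ t : ℝ, 0 ≤ t → (t : EReal) < T → Integrable (fun x => (px u t x)^2))
    (huxx2 : ∀ t : ℝ, 0 ≤ t → (t : EReal) < T →
      Integrable (fun x => (px (px u) t x)^2))
    (hne : ∀ t : ℝ, 0 ≤ t → (t : EReal) < T → (fun x => u t x) ≠ 0)
    (hcons : ∀ t : ℝ, 0 ≤ t → (t : EReal) < T →
      (∫ x, (mf u t x)^2) = ∫ x, (mf u 0 x)^2) :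
    ∀ t : ℝ, 0 ≤ t → (t : EReal) < T → ∀ x : ℝ,
      2 * (u t x)^2 < (∫ y, (mf u 0 y)^2)
        ∧ 2 * (px u t x)^2 < (∫ y, (mf u 0 y)^2) := by
  intro t ht htT
  have hslice : ContDiff ℝ 2 (u t) :=
    contDiff_infty.1 (contDiff_of_contDiffOn_uncurry hu fun _ => ⟨ht, htT⟩) 2
  exact amplitude_and_gradient_bounds_general u t (hslice.differentiable two_ne_zero)
    hslice.differentiable_deriv_two (hu2 t ht htT) (hux2 t ht htT) (huxx2 t ht htT) (hne t ht htT)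
    (hcons t ht htT).le

end
end

section
/- Let f1, g1 : ℝ → ℝ be smooth, let F1(y) = ∫_0^y f1(s) ds and G1(y) = ∫_0^y g1(s) ds, and let c ∈ ℝ. Let U : ℝ → ℝ be a smooth function satisfying, for all ξ ∈ ℝ, the travelling-wave ODE −c( U' − U''' ) + U' (U − U'') f1(U² − U'²) + d/dξ[ (U − U'')( U f1(U² − U'²) + g1(U² − U'²) ) ] = 0, and suppose U(ξ), U'(ξ), U''(ξ) → 0 as ξ → +∞ and as ξ → −∞. Then for every ξ ∈ ℝ: c( U'(ξ)² − U(ξ)² ) + U(ξ) F1( U(ξ)² − U'(ξ)² ) + G1( U(ξ)² − U'(ξ)² ) = 0. -/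
open Real Filter

/-!
Since `U' (U - U'') f1(U² - U'²) = (F1(U² - U'²) / 2)'`, the travelling-wave equation is a total
derivative, which gives a first integral `M`. The function `E` in the conclusion satisfies
`E' = 2 U' M`. Decay forces first `M = 0`, hence `E' = 0`, and then `E = 0`.
-/

theorem eq_of_hasDerivAt_zero_of_tendsto {E : Type*} [NormedAddCommGroup E] [NormedSpace ℝ E]
    {h : ℝ → E} {a : E} {l : Filter ℝ} [l.NeBot] (hderiv : ∀ x, HasDerivAt h 0 x)
    (hlim : Tendsto h l (nhds a)) (x : ℝ) : h x = a := by
  have hconst : h = fun _ => h x := funext fun y =>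
    is_const_of_deriv_eq_zero (fun z => (hderiv z).differentiableAt) (fun z => (hderiv z).deriv) y x
  rw [hconst] at hlim
  exact tendsto_nhds_unique tendsto_const_nhds hlim

theorem hasDerivAt_of_forall_eq_integral {E : Type*} [NormedAddCommGroup E] [NormedSpace ℝ E]
    [CompleteSpace E] {f F : ℝ → E} {a : ℝ} (hf : Continuous f)
    (hF : ∀ y, F y = ∫ s in a..y, f s) (y : ℝ) : HasDerivAt F (f y) y :=
  funext hF ▸ (hf.integral_hasStrictDerivAt a y).hasDerivAt

/-- The term `m (u f(u² - u'²) + g(u² - u'²))` under the total derivative in the travelling-wave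
equation, with `m = u - u''`. Here and below the derivatives of the profile `u` are separate
arguments `u'`, `u''`. -/
def momentumFlux (f g : ℝ → ℝ) (u u' u'' : ℝ → ℝ) (x : ℝ) : ℝ :=
  (u x - u'' x) * (u x * f (u x ^ 2 - u' x ^ 2) + g (u x ^ 2 - u' x ^ 2))

/-- The first integral `M` obtained by integrating the travelling-wave equation of speed `c` once;
`F` stands for an antiderivative of `f`. -/
noncomputable def momentumFirstIntegral (f g F : ℝ → ℝ) (c : ℝ) (u u' u'' : ℝ → ℝ) (x : ℝ) : ℝ :=
  -c * (u x - u'' x) + F (u x ^ 2 - u' x ^ 2) / 2 + momentumFlux f g u u' u'' x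

/-- The combined first integral `E` of a travelling wave of speed `c`, for antiderivatives `F`, `G`
of the two nonlinearities. It is conserved along solutions on which `momentumFirstIntegral`
vanishes. -/
def combinedFirstIntegral (F G : ℝ → ℝ) (c : ℝ) (u u' : ℝ → ℝ) (x : ℝ) : ℝ :=
  c * (u' x ^ 2 - u x ^ 2) + u x * F (u x ^ 2 - u' x ^ 2) + G (u x ^ 2 - u' x ^ 2)

section Derivatives

variable {f g F G u u' u'' : ℝ → ℝ} {c x : ℝ}

theorem hasDerivAt_sq_sub_deriv_sq (hu : HasDerivAt u (u' x) x) (hu' : HasDerivAt u' (u'' x) x) :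
    HasDerivAt (fun s => u s ^ 2 - u' s ^ 2) (2 * u' x * (u x - u'' x)) x := by
  refine ((hu.pow 2).sub (hu'.pow 2)).congr_deriv ?_
  push_cast
  ring

theorem hasDerivAt_momentumFirstIntegral {u₃ w : ℝ} (hu : HasDerivAt u (u' x) x)
    (hu' : HasDerivAt u' (u'' x) x) (hu'' : HasDerivAt u'' u₃ x)
    (hF : HasDerivAt F (f (u x ^ 2 - u' x ^ 2)) (u x ^ 2 - u' x ^ 2))
    (hflux : HasDerivAt (momentumFlux f g u u' u'') w x) :
    HasDerivAt (momentumFirstIntegral f g F c u u' u'')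
      (-c * (u' x - u₃) + u' x * (u x - u'' x) * f (u x ^ 2 - u' x ^ 2) + w) x := by
  have hFy := hF.comp x (hasDerivAt_sq_sub_deriv_sq hu hu')
  refine ((((hu.sub hu'').const_mul (-c)).add (hFy.div_const 2)).add hflux).congr_deriv ?_
  ring

theorem hasDerivAt_combinedFirstIntegral (hu : HasDerivAt u (u' x) x)
    (hu' : HasDerivAt u' (u'' x) x)
    (hF : HasDerivAt F (f (u x ^ 2 - u' x ^ 2)) (u x ^ 2 - u' x ^ 2))
    (hG : HasDerivAt G (g (u x ^ 2 - u' x ^ 2)) (u x ^ 2 - u' x ^ 2)) :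
    HasDerivAt (combinedFirstIntegral F G c u u')
      (2 * u' x * momentumFirstIntegral f g F c u u' u'' x) x := by
  have hy := hasDerivAt_sq_sub_deriv_sq hu hu'
  refine (((((hu'.pow 2).sub (hu.pow 2)).const_mul c).add
    (hu.mul (hF.comp x hy))).add (hG.comp x hy)).congr_deriv ?_
  simp only [momentumFirstIntegral, momentumFlux, Function.comp_apply]
  push_cast
  ring

theorem differentiable_momentumFlux (hf : Differentiable ℝ f) (hg : Differentiable ℝ g)
    (hu : Differentiable ℝ u) (hu' : Differentiable ℝ u') (hu'' : Differentiable ℝ u'') :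
    Differentiable ℝ (momentumFlux f g u u' u'') := by
  unfold momentumFlux
  fun_prop

end Derivatives

section Limits

theorem tendsto_comp_sq_sub_sq {α : Type*} {l : Filter α} {u v : α → ℝ} {h : ℝ → ℝ}
    (hh : ContinuousAt h 0) (hu : Tendsto u l (nhds 0)) (hv : Tendsto v l (nhds 0)) :
    Tendsto (fun s => h (u s ^ 2 - v s ^ 2)) l (nhds (h 0)) :=
  hh.tendsto.comp (by simpa using (hu.pow 2).sub (hv.pow 2))

variable {l : Filter ℝ} {f g F G u u' u'' : ℝ → ℝ} {c : ℝ}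

theorem tendsto_momentumFirstIntegral (hf : ContinuousAt f 0) (hg : ContinuousAt g 0)
    (hF : ContinuousAt F 0) (hF0 : F 0 = 0) (hu : Tendsto u l (nhds 0))
    (hu' : Tendsto u' l (nhds 0)) (hu'' : Tendsto u'' l (nhds 0)) :
    Tendsto (momentumFirstIntegral f g F c u u' u'') l (nhds 0) := by
  have hm := hu.sub hu''
  have hflux := hm.mul
    ((hu.mul (tendsto_comp_sq_sub_sq hf hu hu')).add (tendsto_comp_sq_sub_sq hg hu hu'))
  unfold momentumFirstIntegral momentumFlux
  simpa [hF0] using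
    ((hm.const_mul (-c)).add ((tendsto_comp_sq_sub_sq hF hu hu').div_const 2)).add hflux

theorem tendsto_combinedFirstIntegral (hF : ContinuousAt F 0) (hG : ContinuousAt G 0)
    (hG0 : G 0 = 0) (hu : Tendsto u l (nhds 0)) (hu' : Tendsto u' l (nhds 0)) :
    Tendsto (combinedFirstIntegral F G c u u') l (nhds 0) := by
  unfold combinedFirstIntegral
  simpa [hG0] using ((((hu'.pow 2).sub (hu.pow 2)).const_mul c).add
    (hu.mul (tendsto_comp_sq_sub_sq hF hu hu'))).add (tendsto_comp_sq_sub_sq hG hu hu')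

end Limits

theorem solitary_wave_first_integral_relation_general
    {f1 g1 : ℝ → ℝ} (hf1 : Differentiable ℝ f1) (hg1 : Differentiable ℝ g1)
    {F1 G1 : ℝ → ℝ}
    (hF1 : ∀ y : ℝ, F1 y = ∫ s in (0:ℝ)..y, f1 s)
    (hG1 : ∀ y : ℝ, G1 y = ∫ s in (0:ℝ)..y, g1 s)
    {c : ℝ}
    {U : ℝ → ℝ} (hU : ContDiff ℝ 3 U)
    (hode : ∀ ξ : ℝ,
      -c * (deriv U ξ - deriv (deriv (deriv U)) ξ)
        + deriv U ξ * (U ξ - deriv (deriv U) ξ) * f1 ((U ξ)^2 - (deriv U ξ)^2)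
        + deriv (fun s =>
            (U s - deriv (deriv U) s)
              * (U s * f1 ((U s)^2 - (deriv U s)^2)
                  + g1 ((U s)^2 - (deriv U s)^2))) ξ = 0)
    {l : Filter ℝ} [l.NeBot] (hUlim : Tendsto U l (nhds 0))
    (hU'lim : Tendsto (deriv U) l (nhds 0)) (hU''lim : Tendsto (deriv (deriv U)) l (nhds 0)) :
    ∀ ξ : ℝ,
      c * ((deriv U ξ)^2 - (U ξ)^2)
        + U ξ * F1 ((U ξ)^2 - (deriv U ξ)^2)
        + G1 ((U ξ)^2 - (deriv U ξ)^2) = 0 := by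
  have hF1' := hasDerivAt_of_forall_eq_integral hf1.continuous hF1
  have hG1' := hasDerivAt_of_forall_eq_integral hg1.continuous hG1
  have hF1_zero : F1 0 = 0 := (hF1 0).trans intervalIntegral.integral_same
  have hG1_zero : G1 0 = 0 := (hG1 0).trans intervalIntegral.integral_same
  have dU : Differentiable ℝ U := hU.differentiable (by norm_num)
  have dU' : Differentiable ℝ (deriv U) := (hU.iterate_deriv' 2 1).differentiable (by norm_num)
  have dU'' : Differentiable ℝ (deriv (deriv U)) :=
    (hU.iterate_deriv' 1 2).differentiable (by norm_num)
  have momentum_eq_zero (ξ : ℝ) :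
      momentumFirstIntegral f1 g1 F1 c U (deriv U) (deriv (deriv U)) ξ = 0 :=
    eq_of_hasDerivAt_zero_of_tendsto
      (fun x => (hasDerivAt_momentumFirstIntegral (dU x).hasDerivAt (dU' x).hasDerivAt
        (dU'' x).hasDerivAt (hF1' _)
        (differentiable_momentumFlux hf1 hg1 dU dU' dU'' x).hasDerivAt).congr_deriv (hode x))
      (tendsto_momentumFirstIntegral hf1.continuous.continuousAt hg1.continuous.continuousAt
        (hF1' 0).continuousAt hF1_zero hUlim hU'lim hU''lim) ξ
  exact eq_of_hasDerivAt_zero_of_tendsto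
    (fun x => (hasDerivAt_combinedFirstIntegral (dU x).hasDerivAt (dU' x).hasDerivAt
      (hF1' _) (hG1' _)).congr_deriv (by rw [momentum_eq_zero, mul_zero]))
    (tendsto_combinedFirstIntegral (hF1' 0).continuousAt (hG1' 0).continuousAt hG1_zero
      hUlim hU'lim)

/-- for a solitary travelling wave (decaying together with its first two
derivatives at ±∞), the combined first integral relation holds pointwise. -/
theorem solitary_wave_first_integral_relation
    (f1 g1 : ℝ → ℝ) (hf1 : ContDiff ℝ (⊤ : ℕ∞) f1) (hg1 : ContDiff ℝ (⊤ : ℕ∞) g1)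
    (F1 G1 : ℝ → ℝ)
    (hF1 : ∀ y : ℝ, F1 y = ∫ s in (0:ℝ)..y, f1 s)
    (hG1 : ∀ y : ℝ, G1 y = ∫ s in (0:ℝ)..y, g1 s)
    (c : ℝ)
    (U : ℝ → ℝ) (hU : ContDiff ℝ (⊤ : ℕ∞) U)
    (hode : ∀ ξ : ℝ,
      -c * (deriv U ξ - deriv (deriv (deriv U)) ξ)
        + deriv U ξ * (U ξ - deriv (deriv U) ξ) * f1 ((U ξ)^2 - (deriv U ξ)^2)
        + deriv (fun s =>
            (U s - deriv (deriv U) s)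
              * (U s * f1 ((U s)^2 - (deriv U s)^2)
                  + g1 ((U s)^2 - (deriv U s)^2))) ξ = 0)
    (hUtop : Tendsto U atTop (nhds 0)) (hUbot : Tendsto U atBot (nhds 0))
    (hU'top : Tendsto (deriv U) atTop (nhds 0))
    (hU'bot : Tendsto (deriv U) atBot (nhds 0))
    (hU''top : Tendsto (deriv (deriv U)) atTop (nhds 0))
    (hU''bot : Tendsto (deriv (deriv U)) atBot (nhds 0)) :
    ∀ ξ : ℝ,
      c * ((deriv U ξ)^2 - (U ξ)^2)
        + U ξ * F1 ((U ξ)^2 - (deriv U ξ)^2)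
        + G1 ((U ξ)^2 - (deriv U ξ)^2) = 0 :=
  solitary_wave_first_integral_relation_general (hf1.differentiable (by simp))
    (hg1.differentiable (by simp)) hF1 hG1 (contDiff_infty.1 hU 3) hode hUtop hU'top hU''top
end
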